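/- arXiv:1407.7799 — 2 statements merged into one kernel-verified Lean document; each statement's English description precedes it below -/
import Mathlib

section
/- Let d ≥ 2 be an integer and let (β_{ℓ,s}) be a family of real numbers indexed by the pairs (ℓ,s) of integers with 0 ≤ ℓ < s ≤ d. If the linear combination Σ_{0 ≤ ℓ < s ≤ d} β_{ℓ,s} · f_{ℓ,s}(k) equals 0 for all sufficiently large integers k, then β_{ℓ,s} = 0 for every pair (ℓ,s). In other words, the functions k ↦ f_{ℓ,s}(k), for 0 ≤ ℓ < s ≤ d, are linearly independent as real-valued functions of k. -/
/-- Stirling numbers of the second kind: `stirling2 n k` is the number of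
partitions of an `n`-element set into `k` nonempty blocks. -/
def stirling2 : ℕ → ℕ → ℕ
  | 0, 0 => 1
  | 0, _ + 1 => 0
  | _ + 1, 0 => 0
  | n + 1, k + 1 => (k + 1) * stirling2 n (k + 1) + stirling2 n k

/-- The function `f_{ℓ,s}(k) = k⁽ℓ⁾ · (s−ℓ)! · S(k−ℓ, s−ℓ)`. -/
def fls (ℓ s k : ℕ) : ℕ :=
  k.descFactorial ℓ * (s - ℓ).factorial * stirling2 (k - ℓ) (s - ℓ)

/-! The identity `m ^ n = ∑ j ≤ m, m⁽ʲ⁾ S(n, j)` has nonnegative terms and last term `m! S(n, m)`.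
Hence `j! S(n, j) ≤ j ^ n` for every `j`, so the terms with `j < m` are `o(m ^ n)` and
`m! S(n, m) ~ m ^ n`. Consequently `f_{ℓ,s}(k)` has the order of `k ^ ℓ * (s - ℓ) ^ k`. These orders
of growth are pairwise comparable and distinct, so the largest one occurring with a nonzero
coefficient in a linear combination cannot be cancelled by the others. -/

open Filter Asymptotics Finset

section LinearIndependence

variable {α ι 𝕜 E : Type*} {l : Filter α} {s : Finset ι}

theorem exists_forall_isLittleO_of_pairwise [SeminormedAddCommGroup E] {g : ι → α → E}
    (hs : s.Nonempty)
    (hg : (s : Set ι).Pairwise fun i j ↦ g i =o[l] g j ∨ g j =o[l] g i) :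
    ∃ i ∈ s, ∀ j ∈ s, j ≠ i → g j =o[l] g i := by
  induction hs using Finset.Nonempty.cons_induction with
  | singleton a => simp
  | cons a s ha _ ih =>
    obtain ⟨i, his, hi⟩ := ih (hg.mono (by simp))
    have hia : i ≠ a := ne_of_mem_of_not_mem his ha
    rcases hg (mem_cons_of_mem his) (mem_cons_self a s) hia with h | h
    · refine ⟨a, mem_cons_self a s, fun j hj hja ↦ ?_⟩
      have hjs : j ∈ s := (mem_cons.mp hj).resolve_left hja
      obtain rfl | hji := eq_or_ne j i
      · exact h
      · exact (hi j hjs hji).trans h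
    · refine ⟨i, mem_cons_of_mem his, fun j hj hji ↦ ?_⟩
      obtain rfl | hjs := mem_cons.mp hj
      · exact h
      · exact hi j hjs hji

theorem isEquivalent_sum_of_isLittleO [NormedAddCommGroup E] {f : ι → α → E} {i : ι}
    (hi : i ∈ s) (hf : ∀ j ∈ s, j ≠ i → f j =o[l] f i) :
    (fun x ↦ ∑ j ∈ s, f j x) ~[l] f i := by
  classical
  have hrest : (fun x ↦ ∑ j ∈ s.erase i, f j x) =o[l] f i :=
    .fun_sum fun j hj ↦ hf j (mem_of_mem_erase hj) (ne_of_mem_erase hj)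
  refine (IsEquivalent.refl.add_isLittleO hrest).congr_left (.of_eq ?_)
  ext x
  exact add_sum_erase s (f · x) hi

theorem eq_zero_of_frequently_sum_smul_eq_zero [NormedField 𝕜] [NormedAddCommGroup E]
    [NormedSpace 𝕜 E] {g : ι → α → E} {c : ι → 𝕜} (hne : ∀ i ∈ s, ∀ᶠ x in l, g i x ≠ 0)
    (hg : (s : Set ι).Pairwise fun i j ↦ g i =o[l] g j ∨ g j =o[l] g i)
    (hsum : ∃ᶠ x in l, ∑ i ∈ s, c i • g i x = 0) : ∀ i ∈ s, c i = 0 := by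
  classical
  by_contra! hc
  let t := {i ∈ s | c i ≠ 0}
  have hts : t ⊆ s := filter_subset _ s
  obtain ⟨i, hit, hi⟩ := exists_forall_isLittleO_of_pairwise (s := t)
    (filter_nonempty_iff.mpr hc) (hg.mono (mod_cast hts))
  have hci : c i ≠ 0 := (mem_filter.mp hit).2
  have hequiv : (fun x ↦ ∑ j ∈ s, c j • g j x) ~[l] fun x ↦ c i • g i x := by
    refine isEquivalent_sum_of_isLittleO (f := fun j x ↦ c j • g j x) (hts hit) fun j hj hji ↦ ?_
    rw [isLittleO_const_smul_right hci]
    by_cases hcj : c j = 0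
    · simp [hcj]
    · exact (hi j (mem_filter.mpr ⟨hj, hcj⟩) hji).const_smul_left (c j)
  obtain ⟨x, hx, hx_imp, hgx⟩ :=
    (hsum.and_eventually (hequiv.isBigO_symm.eq_zero_imp.and (hne i (hts hit)))).exists
  exact smul_ne_zero hci hgx (hx_imp hx)

end LinearIndependence

theorem isLittleO_pow_mul_const_pow {r₁ r₂ : ℝ} {a b : ℕ} (h : |r₁| < |r₂| ∨ r₁ = r₂ ∧ a < b) :
    (fun n : ℕ ↦ (n : ℝ) ^ a * r₁ ^ n) =o[atTop] fun n : ℕ ↦ (n : ℝ) ^ b * r₂ ^ n := by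
  rcases h with hr | ⟨rfl, hab⟩
  · have hone : (fun _ ↦ 1 : ℕ → ℝ) =O[atTop] fun n : ℕ ↦ (n : ℝ) ^ b := by
      refine .of_norm_eventuallyLE ?_
      filter_upwards [eventually_ge_atTop 1] with n hn
      rw [norm_one]
      exact one_le_pow₀ (mod_cast hn)
    refine (isLittleO_pow_const_mul_const_pow_const_pow_of_norm_lt a hr).trans_isBigO ?_
    simpa only [one_mul, norm_pow, Real.norm_eq_abs] using
      hone.mul (isBigO_refl (fun n ↦ r₂ ^ n) atTop).norm_left
  · exact ((isLittleO_pow_pow_atTop_of_lt hab).comp_tendsto tendsto_natCast_atTop_atTop).mul_isBigO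
      (isBigO_refl _ _)

theorem sum_descFactorial_mul_stirlingSecond (m n : ℕ) :
    ∑ j ∈ range (m + 1), m.descFactorial j * n.stirlingSecond j = m ^ n := by
  induction n with
  | zero => simp [sum_range_succ']
  | succ n ih =>
    calc ∑ j ∈ range (m + 1), m.descFactorial j * (n + 1).stirlingSecond j
      _ = ∑ j ∈ range m, m.descFactorial (j + 1) * ((j + 1) * n.stirlingSecond (j + 1)) +
            ∑ j ∈ range m, m.descFactorial (j + 1) * n.stirlingSecond j := by
        simp only [sum_range_succ', Nat.stirlingSecond_succ_succ, Nat.stirlingSecond_succ_zero,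
          mul_zero, add_zero, mul_add, sum_add_distrib]
      _ = ∑ j ∈ range (m + 1), m.descFactorial j * (j * n.stirlingSecond j) +
            ∑ j ∈ range (m + 1), (m - j) * m.descFactorial j * n.stirlingSecond j := by
        congr 1
        · simp [sum_range_succ']
        · simp [sum_range_succ, Nat.descFactorial_succ]
      _ = ∑ j ∈ range (m + 1), m * (m.descFactorial j * n.stirlingSecond j) := by
        rw [← sum_add_distrib]
        refine sum_congr rfl fun j hj ↦ ?_
        obtain ⟨i, rfl⟩ := Nat.exists_eq_add_of_le (mem_range_succ_iff.mp hj)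
        rw [Nat.add_sub_cancel_left]
        ring
      _ = m ^ (n + 1) := by rw [← mul_sum, ih, pow_succ']

theorem factorial_mul_stirlingSecond_le_pow (m n : ℕ) :
    m.factorial * n.stirlingSecond m ≤ m ^ n := by
  rw [← sum_descFactorial_mul_stirlingSecond, ← Nat.descFactorial_self]
  exact single_le_sum (f := fun j ↦ m.descFactorial j * n.stirlingSecond j)
    (fun _ _ ↦ Nat.zero_le _) (self_mem_range_succ m)

theorem isBigO_stirlingSecond (m : ℕ) :
    (fun n : ℕ ↦ (n.stirlingSecond m : ℝ)) =O[atTop] fun n : ℕ ↦ (m : ℝ) ^ n := by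
  refine .of_norm_le fun n ↦ ?_
  rw [RCLike.norm_natCast]
  exact_mod_cast (Nat.le_mul_of_pos_left _ m.factorial_pos).trans
    (factorial_mul_stirlingSecond_le_pow m n)

theorem isEquivalent_factorial_mul_stirlingSecond (m : ℕ) :
    (fun n : ℕ ↦ (m.factorial : ℝ) * n.stirlingSecond m) ~[atTop] fun n : ℕ ↦ (m : ℝ) ^ n := by
  have hlower : (fun n : ℕ ↦ ∑ j ∈ range m, (m.descFactorial j : ℝ) * n.stirlingSecond j)
      =o[atTop] fun n : ℕ ↦ (m : ℝ) ^ n := by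
    refine .fun_sum fun j hj ↦ .const_mul_left ?_ _
    exact (isBigO_stirlingSecond j).trans_isLittleO
      (isLittleO_pow_pow_of_lt_left j.cast_nonneg (mod_cast mem_range.mp hj))
  refine (IsEquivalent.refl.sub_isLittleO hlower).congr_left (.of_eq ?_)
  ext n
  have hsum := sum_descFactorial_mul_stirlingSecond m n
  rw [sum_range_succ, Nat.descFactorial_self] at hsum
  rw [Pi.sub_apply, sub_eq_iff_eq_add']
  exact_mod_cast hsum.symm

theorem stirling2_eq_stirlingSecond : stirling2 = Nat.stirlingSecond := by
  ext n k
  induction n generalizing k with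
  | zero => cases k <;> rfl
  | succ n ih =>
    cases k with
    | zero => rfl
    | succ k => rw [stirling2, Nat.stirlingSecond, ih, ih]

theorem fls_isTheta {ℓ s : ℕ} (h : ℓ < s) :
    (fun k ↦ (fls ℓ s k : ℝ)) =Θ[atTop] fun k ↦ (k : ℝ) ^ ℓ * ((s - ℓ : ℕ) : ℝ) ^ k := by
  have hbase : ((s - ℓ : ℕ) : ℝ) ≠ 0 := mod_cast (Nat.sub_pos_of_lt h).ne'
  have hequiv : (fun k ↦ (fls ℓ s k : ℝ)) ~[atTop]
      fun k ↦ (k : ℝ) ^ ℓ * ((s - ℓ : ℕ) : ℝ) ^ (k - ℓ) := by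
    refine ((isEquivalent_descFactorial ℓ).mul
      ((isEquivalent_factorial_mul_stirlingSecond (s - ℓ)).comp_tendsto
        (tendsto_sub_atTop_nat ℓ))).congr_left (.of_eq ?_)
    ext k
    simp [fls, stirling2_eq_stirlingSecond, mul_assoc]
  have hshift : (fun k : ℕ ↦ ((s - ℓ : ℕ) : ℝ) ^ k) =Θ[atTop]
      fun k ↦ ((s - ℓ : ℕ) : ℝ) ^ (k - ℓ) := by
    refine EventuallyEq.trans_isTheta ?_ (isTheta_rfl.const_mul_left (pow_ne_zero ℓ hbase))
    filter_upwards [eventually_ge_atTop ℓ] with k hk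
    exact (pow_mul_pow_sub _ hk).symm
  exact hequiv.isTheta.trans (isTheta_rfl.mul hshift.symm)

theorem fls_eventually_ne_zero {ℓ s : ℕ} (h : ℓ < s) : ∀ᶠ k in atTop, (fls ℓ s k : ℝ) ≠ 0 := by
  filter_upwards [(fls_isTheta h).eq_zero_iff, eventually_ge_atTop 1] with k hk hk1
  rw [Ne, hk]
  have hbase : 0 < s - ℓ := Nat.sub_pos_of_lt h
  positivity

theorem fls_isLittleO_fls {ℓ s ℓ' s' : ℕ} (h : ℓ < s) (h' : ℓ' < s')
    (hlt : toLex (s - ℓ, ℓ) < toLex (s' - ℓ', ℓ')) :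
    (fun k ↦ (fls ℓ s k : ℝ)) =o[atTop] fun k ↦ (fls ℓ' s' k : ℝ) := by
  rw [(fls_isTheta h).isLittleO_congr_left, (fls_isTheta h').isLittleO_congr_right]
  refine isLittleO_pow_mul_const_pow ?_
  simpa only [Nat.abs_cast, Nat.cast_lt, Nat.cast_inj] using Prod.Lex.toLex_lt_toLex.mp hlt

theorem fls_isLittleO_or_isLittleO {p q : ℕ × ℕ} (hp : p.1 < p.2) (hq : q.1 < q.2) (hpq : p ≠ q) :
    (fun k ↦ (fls p.1 p.2 k : ℝ)) =o[atTop] (fun k ↦ (fls q.1 q.2 k : ℝ)) ∨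
      (fun k ↦ (fls q.1 q.2 k : ℝ)) =o[atTop] fun k ↦ (fls p.1 p.2 k : ℝ) := by
  have hkey : toLex (p.2 - p.1, p.1) ≠ toLex (q.2 - q.1, q.1) := by
    contrapose! hpq
    obtain ⟨hsub, hfst⟩ := Prod.ext_iff.mp (toLex_inj.mp hpq)
    dsimp only at hsub hfst
    exact Prod.ext hfst (by omega)
  exact hkey.lt_or_gt.imp (fls_isLittleO_fls hp hq) (fls_isLittleO_fls hq hp)

theorem stmt9_general {ι : Type*} [Fintype ι] {e : ι → ℕ × ℕ} (he : Function.Injective e)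
    (hlt : ∀ i, (e i).1 < (e i).2) {β : ι → ℝ}
    (h : ∃ᶠ k in atTop, ∑ i, β i * (fls (e i).1 (e i).2 k : ℝ) = 0) : ∀ i, β i = 0 :=
  fun i ↦ eq_zero_of_frequently_sum_smul_eq_zero (fun i _ ↦ fls_eventually_ne_zero (hlt i))
    (fun i _ j _ hij ↦ fls_isLittleO_or_isLittleO (hlt i) (hlt j) (he.ne hij)) h i (mem_univ i)

/-- The functions `k ↦ f_{ℓ,s}(k)` for `0 ≤ ℓ < s ≤ d` are linearly independent: if a
real linear combination of them vanishes for all sufficiently large `k`, then all the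
coefficients are zero. -/
theorem stmt9 (d : ℕ) (hd : 2 ≤ d)
    (β : {p : Fin (d + 1) × Fin (d + 1) // p.1 < p.2} → ℝ)
    (h : ∃ K : ℕ, ∀ k : ℕ, K ≤ k →
      ∑ p : {p : Fin (d + 1) × Fin (d + 1) // p.1 < p.2},
        β p * ((fls (p.1.1 : ℕ) (p.1.2 : ℕ) k : ℕ) : ℝ) = 0) :
    ∀ p, β p = 0 := by
  have hfreq := (eventually_atTop.mpr h).frequently
  exact stmt9_general ((Fin.val_injective.prodMap Fin.val_injective).comp Subtype.val_injective)
    (fun p ↦ p.2) hfreq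
end

section
/- Let ℓ ≥ 0 and m ≥ 1 be integers, and let k be an integer with k ≥ 2ℓ² + m·ln(2m). Then (1/4)·k^ℓ·m^{k−ℓ} ≤ k⁽ℓ⁾ · m! · S(k−ℓ, m) ≤ k^ℓ·m^{k−ℓ}. -/
/-!
The bounds hold factor by factor: `k⁽ℓ⁾` counts the injections from an `ℓ`-set to a `k`-set and
`m! S(n, m)` the surjections from an `n`-set to an `m`-set. The upper bounds compare with all maps,
and the lower bounds are union bounds: at most `C(ℓ, 2) k^(ℓ-1)` maps identify some pair of points,
and at most `m (m-1)^n` maps miss some value. The first is at most half of `k^ℓ` when `ℓ(ℓ-1) ≤ k`,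
and the second is at most half of `m^n` when `n ≥ m ln(2m)`, as
`(1 - 1/m)^n ≤ exp(-n/m) ≤ 1/(2m)`.

Classifying maps by their fibres gives `m^n = ∑ j ≤ m, S(n, j) m⁽ʲ⁾`; the non-surjective maps are
the terms `j < m`, which are compared with the same expansion of `(m-1)^n`.
-/

open Finset
open scoped Nat

lemma mul_descFactorial (m j : ℕ) :
    m * m.descFactorial j = j * m.descFactorial j + m.descFactorial (j + 1) := by
  rcases le_or_gt j m with hj | hj
  · rw [Nat.descFactorial_succ, ← add_mul, Nat.add_sub_cancel' hj]
  · simp [Nat.descFactorial_of_lt, hj]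

lemma succ_descFactorial_le {m j : ℕ} (hj : j ≤ m) :
    (m + 1).descFactorial j ≤ (m + 1) * m.descFactorial j :=
  (Nat.le_mul_of_pos_left _ (by omega)).trans_eq (Nat.succ_descFactorial m j)

lemma pow_succ_le_descFactorial_add (k ℓ : ℕ) :
    k ^ (ℓ + 1) ≤ k.descFactorial (ℓ + 1) + (ℓ + 1).choose 2 * k ^ ℓ := by
  induction ℓ with
  | zero => simp
  | succ ℓ ih =>
    calc k ^ (ℓ + 2)
        = k * k ^ (ℓ + 1) := pow_succ' k (ℓ + 1)
      _ ≤ k * (k.descFactorial (ℓ + 1) + (ℓ + 1).choose 2 * k ^ ℓ) := by gcongr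
      _ = k.descFactorial (ℓ + 2) + (ℓ + 1) * k.descFactorial (ℓ + 1)
            + (ℓ + 1).choose 2 * k ^ (ℓ + 1) := by
          rw [mul_add, mul_descFactorial]; ring
      _ ≤ k.descFactorial (ℓ + 2) + (ℓ + 1) * k ^ (ℓ + 1)
            + (ℓ + 1).choose 2 * k ^ (ℓ + 1) := by
          gcongr; exact Nat.descFactorial_le_pow k (ℓ + 1)
      _ = k.descFactorial (ℓ + 2) + (ℓ + 2).choose 2 * k ^ (ℓ + 1) := by
          rw [Nat.choose_succ_succ' (ℓ + 1) 1, Nat.choose_one_right]; ring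

lemma pow_le_two_mul_descFactorial {k ℓ : ℕ} (h : 2 * ℓ.choose 2 ≤ k) :
    k ^ ℓ ≤ 2 * k.descFactorial ℓ := by
  rcases ℓ with _ | ℓ
  · simp
  · have union_bound := pow_succ_le_descFactorial_add k ℓ
    have half : 2 * (ℓ + 1).choose 2 * k ^ ℓ ≤ k ^ (ℓ + 1) := by
      rw [pow_succ']; gcongr
    linarith

lemma sum_stirling2_mul_descFactorial (n m : ℕ) :
    ∑ j ∈ range (m + 1), stirling2 n j * m.descFactorial j = m ^ n := by
  induction n with
  | zero => simp [sum_range_succ', stirling2]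
  | succ n ih =>
    have shift : ∑ j ∈ range m, (j + 1) * stirling2 n (j + 1) * m.descFactorial (j + 1) =
        ∑ j ∈ range (m + 1), j * stirling2 n j * m.descFactorial j := by
      simp [sum_range_succ']
    have extend : ∑ j ∈ range m, stirling2 n j * m.descFactorial (j + 1) =
        ∑ j ∈ range (m + 1), stirling2 n j * m.descFactorial (j + 1) := by
      simp [sum_range_succ]
    calc ∑ j ∈ range (m + 1), stirling2 (n + 1) j * m.descFactorial j
        = ∑ j ∈ range m, stirling2 (n + 1) (j + 1) * m.descFactorial (j + 1) := by
          simp [sum_range_succ', stirling2]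
      _ = ∑ j ∈ range (m + 1), j * stirling2 n j * m.descFactorial j
            + ∑ j ∈ range (m + 1), stirling2 n j * m.descFactorial (j + 1) := by
          simp only [stirling2, add_mul _ (stirling2 n _), sum_add_distrib, shift, extend]
      _ = ∑ j ∈ range (m + 1), stirling2 n j * (m * m.descFactorial j) := by
          rw [← sum_add_distrib]
          exact sum_congr rfl fun j _ ↦ by rw [mul_descFactorial]; ring
      _ = m ^ (n + 1) := by
          rw [pow_succ', ← ih, mul_sum]
          exact sum_congr rfl fun j _ ↦ mul_left_comm ..

lemma pow_eq_sum_add_factorial_mul_stirling2 (n m : ℕ) :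
    m ^ n = ∑ j ∈ range m, stirling2 n j * m.descFactorial j + m ! * stirling2 n m := by
  rw [← sum_stirling2_mul_descFactorial, sum_range_succ, Nat.descFactorial_self,
    mul_comm (stirling2 n m)]

lemma factorial_mul_stirling2_le_pow (n m : ℕ) : m ! * stirling2 n m ≤ m ^ n :=
  (Nat.le_add_left _ _).trans_eq (pow_eq_sum_add_factorial_mul_stirling2 n m).symm

lemma succ_pow_le_factorial_mul_stirling2_add (n m : ℕ) :
    (m + 1) ^ n ≤ (m + 1)! * stirling2 n (m + 1) + (m + 1) * m ^ n := by
  have missed : ∑ j ∈ range (m + 1), stirling2 n j * (m + 1).descFactorial j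
      ≤ (m + 1) * m ^ n := by
    rw [← sum_stirling2_mul_descFactorial n m, mul_sum]
    refine sum_le_sum fun j hj ↦ ?_
    rw [mul_left_comm]
    exact Nat.mul_le_mul_left _ (succ_descFactorial_le (mem_range_succ_iff.mp hj))
  rw [pow_eq_sum_add_factorial_mul_stirling2 n (m + 1)]
  linarith

lemma mul_sub_one_pow_le_pow {c x : ℝ} {n : ℕ} (hc : 0 < c) (hx : 1 ≤ x)
    (h : x * Real.log c ≤ n) : c * (x - 1) ^ n ≤ x ^ n := by
  have hx₀ : 0 < x := by linarith
  have c_le : c ≤ Real.exp x⁻¹ ^ n := by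
    rw [← Real.exp_nat_mul, ← Real.log_le_iff_le_exp hc, ← div_eq_mul_inv, le_div_iff₀' hx₀]
    exact h
  have base_le : Real.exp x⁻¹ * (x - 1) ≤ x :=
    calc Real.exp x⁻¹ * (x - 1)
        = x * Real.exp x⁻¹ * (1 - x⁻¹) := by field_simp
      _ ≤ x * Real.exp x⁻¹ * Real.exp (-x⁻¹) := by gcongr; exact Real.one_sub_le_exp_neg x⁻¹
      _ = x := by rw [mul_assoc, ← Real.exp_add, add_neg_cancel, Real.exp_zero, mul_one]
  have sub_one_nonneg : 0 ≤ x - 1 := sub_nonneg.mpr hx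
  calc c * (x - 1) ^ n
      ≤ Real.exp x⁻¹ ^ n * (x - 1) ^ n :=
        mul_le_mul_of_nonneg_right c_le (pow_nonneg sub_one_nonneg n)
    _ = (Real.exp x⁻¹ * (x - 1)) ^ n := (mul_pow ..).symm
    _ ≤ x ^ n :=
        pow_le_pow_left₀ (mul_nonneg (Real.exp_nonneg x⁻¹) sub_one_nonneg) base_le n

lemma pow_le_two_mul_factorial_mul_stirling2 {m n : ℕ} (hm : 1 ≤ m)
    (h : (m : ℝ) * Real.log (2 * m) ≤ n) : m ^ n ≤ 2 * (m ! * stirling2 n m) := by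
  obtain ⟨p, rfl⟩ := Nat.exists_eq_add_of_le' hm
  have half : 2 * (p + 1) * p ^ n ≤ (p + 1) ^ n := by
    have := mul_sub_one_pow_le_pow (by positivity) (by simp) h
    rw [Nat.cast_add_one, add_sub_cancel_right] at this
    exact_mod_cast this
  have union_bound := succ_pow_le_factorial_mul_stirling2_add n p
  linarith

lemma natCast_mul_log_two_mul_nonneg (m : ℕ) : 0 ≤ (m : ℝ) * Real.log (2 * m) :=
  mul_nonneg m.cast_nonneg (mod_cast Real.log_natCast_nonneg (2 * m))

theorem stmt10_general {ℓ m k : ℕ} (hm : 1 ≤ m) (hℓ : (ℓ : ℝ) * (ℓ - 1) ≤ k)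
    (hk : (ℓ : ℝ) + m * Real.log (2 * m) ≤ k) :
    (1 / 4 : ℝ) * (k : ℝ) ^ ℓ * (m : ℝ) ^ (k - ℓ) ≤
        ((k.descFactorial ℓ * Nat.factorial m * stirling2 (k - ℓ) m : ℕ) : ℝ) ∧
      ((k.descFactorial ℓ * Nat.factorial m * stirling2 (k - ℓ) m : ℕ) : ℝ) ≤
        (k : ℝ) ^ ℓ * (m : ℝ) ^ (k - ℓ) := by
  have hℓk : ℓ ≤ k := by
    have := natCast_mul_log_two_mul_nonneg m
    exact_mod_cast (by linarith : (ℓ : ℝ) ≤ k)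
  have injections : k ^ ℓ ≤ 2 * k.descFactorial ℓ := by
    refine pow_le_two_mul_descFactorial (Nat.cast_le (α := ℝ).mp ?_)
    rw [Nat.cast_mul, Nat.cast_choose_two]
    linarith
  have surjections : m ^ (k - ℓ) ≤ 2 * (m ! * stirling2 (k - ℓ) m) := by
    refine pow_le_two_mul_factorial_mul_stirling2 hm ?_
    rw [Nat.cast_sub hℓk]
    linarith
  rw [mul_assoc (k.descFactorial ℓ)]
  constructor
  · have product : (k : ℝ) ^ ℓ * m ^ (k - ℓ) ≤
        2 * k.descFactorial ℓ * (2 * (m ! * stirling2 (k - ℓ) m)) :=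
      mod_cast Nat.mul_le_mul injections surjections
    push_cast
    linarith
  · exact_mod_cast Nat.mul_le_mul (Nat.descFactorial_le_pow k ℓ)
      (factorial_mul_stirling2_le_pow (k - ℓ) m)

/-- For integers `ℓ ≥ 0`, `m ≥ 1` and `k ≥ 2ℓ² + m·ln(2m)`:
`(1/4)·k^ℓ·m^(k−ℓ) ≤ k⁽ℓ⁾ · m! · S(k−ℓ, m) ≤ k^ℓ·m^(k−ℓ)`. -/
theorem stmt10 (ℓ m k : ℕ) (hm : 1 ≤ m)
    (hk : (k : ℝ) ≥ 2 * (ℓ : ℝ) ^ 2 + (m : ℝ) * Real.log (2 * (m : ℝ))) :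
    (1 / 4 : ℝ) * (k : ℝ) ^ ℓ * (m : ℝ) ^ (k - ℓ) ≤
        ((k.descFactorial ℓ * Nat.factorial m * stirling2 (k - ℓ) m : ℕ) : ℝ) ∧
      ((k.descFactorial ℓ * Nat.factorial m * stirling2 (k - ℓ) m : ℕ) : ℝ) ≤
        (k : ℝ) ^ ℓ * (m : ℝ) ^ (k - ℓ) := by
  have ℓ_le_sq : (ℓ : ℝ) ≤ ℓ ^ 2 := mod_cast Nat.le_self_pow two_ne_zero ℓ
  have := natCast_mul_log_two_mul_nonneg m
  exact stmt10_general hm (by linarith) (by linarith)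
end
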